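/- Let V be a symplectic vector space, C a coisotropic subspace, and L a Lagrangian subspace of V. Then the reduction of L by C is Lagrangian: the subspace Λ := (L ∩ C) + Cᗮ of V satisfies Λᗮ ∩ C = Λ; equivalently, the image of L ∩ C in the symplectic reduction C/Cᗮ is a Lagrangian subspace of C/Cᗮ. -/

import Mathlib

/-! The orthogonal turns sums into intersections, and is an involution on subspaces, so
`(L ⊓ C)ᗮ = Lᗮ ⊔ Cᗮ = L ⊔ Cᗮ`. With `Λ = (L ⊓ C) ⊔ Cᗮ` this gives `Λᗮ = (L ⊔ Cᗮ) ⊓ C`, and since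
`Cᗮ ≤ C` the modular law identifies this with `(L ⊓ C) ⊔ Cᗮ = Λ`. -/

open Module

lemma bilinForm_orthogonal_sup {V : Type*} [AddCommGroup V] [Module ℝ V]
    (ω : LinearMap.BilinForm ℝ V) (A B : Submodule ℝ V) :
    ω.orthogonal (A ⊔ B) = ω.orthogonal A ⊓ ω.orthogonal B := by
  apply le_antisymm
  · exact le_inf (LinearMap.BilinForm.orthogonal_le le_sup_left)
      (LinearMap.BilinForm.orthogonal_le le_sup_right)
  · rintro x ⟨hA, hB⟩ y hy
    obtain ⟨a, ha, b, hb, rfl⟩ := Submodule.mem_sup.mp hy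
    have h₁ : ω a x = 0 := hA a ha
    have h₂ : ω b x = 0 := hB b hb
    change ω (a + b) x = 0
    simp [h₁, h₂]

/-- The reduction of a Lagrangian subspace by a coisotropic subspace is Lagrangian: if `C` is
coisotropic and `L` is Lagrangian in a symplectic vector space `V`, then the subspace
`Λ = (L ⊓ C) ⊔ Cᗮ` of `V` (representing the image of `L ⊓ C` in the symplectic reduction
`C/Cᗮ`) satisfies `Λᗮ ⊓ C = Λ`; i.e. the image of `L ⊓ C` in `C/Cᗮ` is Lagrangian. -/
theorem reduction_of_lagrangian_is_lagrangian
    (V : Type*) [AddCommGroup V] [Module ℝ V] [FiniteDimensional ℝ V]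
    (ω : LinearMap.BilinForm ℝ V) (hnd : ω.Nondegenerate) (halt : ω.IsAlt)
    (C : Submodule ℝ V) (hC : ω.orthogonal C ≤ C)
    (L : Submodule ℝ V) (hL : ω.orthogonal L = L) :
    ω.orthogonal ((L ⊓ C) ⊔ ω.orthogonal C) ⊓ C = (L ⊓ C) ⊔ ω.orthogonal C := by
  have hrefl : ω.IsRefl := halt.isRefl
  have hCC := LinearMap.BilinForm.orthogonal_orthogonal hnd hrefl C
  have hLC : ω.orthogonal (L ⊓ C) = L ⊔ ω.orthogonal C := by
    rw [← LinearMap.BilinForm.orthogonal_orthogonal hnd hrefl (L ⊔ ω.orthogonal C),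
      bilinForm_orthogonal_sup, hL, hCC]
  rw [bilinForm_orthogonal_sup, hLC, hCC, inf_assoc, inf_idem, sup_comm L,
    sup_inf_assoc_of_le L hC, sup_comm]
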